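/- arXiv:2206.00163 — 2 statements merged into one kernel-verified Lean document; each statement's English description precedes it below -/
import Mathlib

section
/- Watson's identities: G(q)H(−q)+G(−q)H(q) = 2ψ(q²)/(q²;q²)_∞ and G(q)H(−q)−G(−q)H(q) = 2qψ(q^{10})/(q²;q²)_∞, where ψ(q)=∑_{n≥0} q^{n(n+1)/2}. -/
/-- Rogers–Ramanujan series `G` in product form: `G(q) = 1/((q;q⁵)_∞ (q⁴;q⁵)_∞)`. -/
noncomputable def RRG (q : ℂ) : ℂ :=
  1 / ((∏' k : ℕ, (1 - q ^ (5 * k + 1))) * ∏' k : ℕ, (1 - q ^ (5 * k + 4)))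

/-- Rogers–Ramanujan series `H` in product form: `H(q) = 1/((q²;q⁵)_∞ (q³;q⁵)_∞)`. -/
noncomputable def RRH (q : ℂ) : ℂ :=
  1 / ((∏' k : ℕ, (1 - q ^ (5 * k + 2))) * ∏' k : ℕ, (1 - q ^ (5 * k + 3)))

/-- Ramanujan's theta function `ψ(q) = ∑_{n≥0} q^(n(n+1)/2)`. -/
noncomputable def rpsi (q : ℂ) : ℂ := ∑' n : ℕ, q ^ (n * (n + 1) / 2)

/-!
By the Jacobi triple product, `f(a, b) = ∑ᵢ a^(i(i+1)/2) b^(i(i-1)/2)` is an infinite product.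
Splitting the double series `f(q, q⁹) f(-q³, -q⁷)` by the parity of the sum of its two indices gives
`f(-q⁴, -q¹⁶) f(-q⁸, -q¹²) + q f(-q¹⁴, -q⁶) f(-q¹⁸, -q²)`, and the two summands are the even and
the odd part of `(q²;q⁴)_∞ (q²⁰;q²⁰)_∞ (ψ(q²) + q ψ(q¹⁰))`. Rewritten with infinite products, this
says `G(q) H(-q) = (ψ(q²) + q ψ(q¹⁰)) / (q²;q²)_∞`, and both identities follow by combining it
with its image under `q ↦ -q`.
-/

open Filter Finset Topology

section Finite

variable {R : Type*} [CommRing R]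

/-- The finite `q`-Pochhammer symbol `(a; q)_n`. -/
def qPochhammer (a q : R) (n : ℕ) : R := ∏ k ∈ range n, (1 - a * q ^ k)

lemma qPochhammer_zero (a q : R) : qPochhammer a q 0 = 1 := prod_range_zero _

lemma qPochhammer_succ (a q : R) (n : ℕ) :
    qPochhammer a q (n + 1) = qPochhammer a q n * (1 - a * q ^ n) :=
  prod_range_succ _ n

lemma qPochhammer_succ' (a q : R) (n : ℕ) :
    qPochhammer a q (n + 1) = (1 - a) * qPochhammer (a * q) q n := by
  simp only [qPochhammer, prod_range_succ', pow_zero, mul_one, pow_succ', mul_assoc, mul_comm]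

lemma qPochhammer_mul_length (a q : R) (m n : ℕ) :
    qPochhammer a q (m * n) = ∏ r ∈ range m, qPochhammer (a * q ^ r) (q ^ m) n := by
  induction n with
  | zero => simp [qPochhammer_zero]
  | succ n ih =>
    simp only [qPochhammer_succ, prod_mul_distrib]
    rw [← ih, Nat.mul_succ, qPochhammer, qPochhammer, prod_range_add]
    congr 1
    exact prod_congr rfl fun r _ => by ring

/-- The Gaussian binomial coefficient, defined by its Pascal recursion so that no division by
`1 - q ^ k` is needed. -/
def qBinomial (q : R) : ℕ → ℕ → R
  | _, 0 => 1
  | 0, _ + 1 => 0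
  | n + 1, k + 1 => q ^ (k + 1) * qBinomial q n (k + 1) + qBinomial q n k

lemma qBinomial_zero_right (q : R) (n : ℕ) : qBinomial q n 0 = 1 := by
  cases n <;> rfl

lemma qBinomial_succ_succ (q : R) (n k : ℕ) :
    qBinomial q (n + 1) (k + 1) = q ^ (k + 1) * qBinomial q n (k + 1) + qBinomial q n k :=
  rfl

lemma qBinomial_eq_zero_of_lt (q : R) {n k : ℕ} (h : n < k) : qBinomial q n k = 0 := by
  induction n generalizing k with
  | zero =>
    obtain ⟨k, rfl⟩ := Nat.exists_eq_succ_of_ne_zero h.ne'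
    rfl
  | succ n ih =>
    obtain ⟨k, rfl⟩ := Nat.exists_eq_succ_of_ne_zero (Nat.ne_zero_of_lt h)
    rw [qBinomial_succ_succ, ih (by lia), ih (by lia), mul_zero, add_zero]

lemma qBinomial_self (q : R) (n : ℕ) : qBinomial q n n = 1 := by
  induction n with
  | zero => rfl
  | succ n ih =>
    rw [qBinomial_succ_succ, ih, qBinomial_eq_zero_of_lt q n.lt_succ_self, mul_zero, zero_add]

lemma qBinomial_mul_qPochhammer (q : R) (m n : ℕ) :
    qBinomial q (m + n) m * (qPochhammer q q m * qPochhammer q q n) = qPochhammer q q (m + n) := by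
  induction m generalizing n with
  | zero => simp [qBinomial_zero_right, qPochhammer_zero]
  | succ m ihm =>
    induction n with
    | zero => simp [qBinomial_self, qPochhammer_zero]
    | succ n ihn =>
      have hleft := ihm (n + 1)
      rw [← add_assoc] at hleft
      rw [add_right_comm] at ihn
      rw [show m + 1 + (n + 1) = m + n + 1 + 1 by ring, qBinomial_succ_succ,
        qPochhammer_succ q q (m + n + 1)]
      rw [qPochhammer_succ] at hleft ihn ⊢
      rw [qPochhammer_succ q q n]
      linear_combination q ^ (m + 1) * (1 - q * q ^ n) * ihn + (1 - q * q ^ m) * hleft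

lemma sum_range_qBinomial_succ_mul (q : R) (n : ℕ) (f : ℕ → R) :
    ∑ j ∈ range (n + 2), qBinomial q (n + 1) j * f j =
      ∑ j ∈ range (n + 1), qBinomial q n j * (q ^ j * f j + f (j + 1)) := by
  have hshift : ∑ j ∈ range (n + 1), qBinomial q n j * (q ^ j * f j) =
      ∑ j ∈ range (n + 1), q ^ (j + 1) * qBinomial q n (j + 1) * f (j + 1) + f 0 := by
    rw [← add_zero (∑ j ∈ range (n + 1), qBinomial q n j * (q ^ j * f j)),
      ← zero_mul (q ^ (n + 1) * f (n + 1)), ← qBinomial_eq_zero_of_lt q n.lt_succ_self,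
      ← sum_range_succ, sum_range_succ', qBinomial_zero_right]
    simp only [pow_zero, one_mul, mul_left_comm, mul_assoc]
  simp only [sum_range_succ' _ (n + 1), qBinomial_succ_succ, qBinomial_zero_right, add_mul,
    mul_add, sum_add_distrib, hshift]
  ring

end Finite

section ThetaTerm

variable {K : Type*} [Field K] {a b c d : K}

/-- The general term `a ^ (i(i+1)/2) * b ^ (i(i-1)/2)` of Ramanujan's theta series `f(a, b)`. -/
def thetaTerm (a b : K) (i : ℤ) : K := a ^ (i * (i + 1) / 2) * b ^ (i * (i - 1) / 2)

lemma thetaTerm_zero (a b : K) : thetaTerm a b 0 = 1 := by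
  simp [thetaTerm]

lemma thetaTerm_ne_zero (ha : a ≠ 0) (hb : b ≠ 0) (i : ℤ) : thetaTerm a b i ≠ 0 :=
  mul_ne_zero (zpow_ne_zero _ ha) (zpow_ne_zero _ hb)

lemma thetaTerm_neg (a b : K) (i : ℤ) : thetaTerm a b (-i) = thetaTerm b a i := by
  rw [thetaTerm, thetaTerm, mul_comm]
  congr 3 <;> ring

lemma int_mul_pred_ediv_two_mul_two (i : ℤ) : i * (i - 1) / 2 * 2 = i * (i - 1) :=
  Int.ediv_mul_cancel i.even_mul_pred_self.two_dvd

lemma thetaTerm_eq (ha : a ≠ 0) (b : K) (i : ℤ) :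
    thetaTerm a b i = (a * b) ^ (i * (i - 1) / 2) * a ^ i := by
  have hexp : i * (i + 1) / 2 = i * (i - 1) / 2 + i := by
    rw [← Int.add_mul_ediv_right _ _ two_ne_zero]
    congr 1
    ring
  rw [thetaTerm, hexp, zpow_add₀ ha, mul_zpow]
  ring

lemma thetaTerm_add_one (ha : a ≠ 0) (hb : b ≠ 0) (i : ℤ) :
    thetaTerm a b (i + 1) = thetaTerm a b i * ((a * b) ^ i * a) := by
  have hexp : (i + 1) * (i + 1 - 1) / 2 = i * (i - 1) / 2 + i := by
    rw [← Int.add_mul_ediv_right _ _ two_ne_zero]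
    congr 1
    ring
  rw [thetaTerm_eq ha, thetaTerm_eq ha, hexp, zpow_add₀ (mul_ne_zero ha hb), zpow_add_one₀ ha]
  ring

lemma thetaTerm_scale (ha : a ≠ 0) (b : K) {s : K} (hs : s ≠ 0) (i : ℤ) :
    thetaTerm (a * s) (b / s) i = thetaTerm a b i * s ^ i := by
  rw [thetaTerm_eq (mul_ne_zero ha hs), thetaTerm_eq ha,
    show a * s * (b / s) = a * b by field_simp, mul_zpow a s]
  ring

lemma qPochhammer_neg_eq_sum (ha : a ≠ 0) (hb : b ≠ 0) (n : ℕ) :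
    qPochhammer (-b) (a * b) n =
      ∑ j ∈ range (n + 1), qBinomial (a * b) n j * thetaTerm a b (j - n) := by
  induction n with
  | zero => simp [qPochhammer_zero, qBinomial_zero_right, thetaTerm_zero]
  | succ n ih =>
    rw [sum_range_qBinomial_succ_mul, qPochhammer_succ, ih, sum_mul]
    refine sum_congr rfl fun j _ => ?_
    have hterm : thetaTerm a b (j - n) =
        thetaTerm a b (j - (n + 1 : ℕ)) * ((a * b) ^ ((j : ℤ) - (n + 1 : ℕ)) * a) := by
      rw [← thetaTerm_add_one ha hb]
      push_cast
      ring_nf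
    have hpow : (a * b) ^ ((j : ℤ) - (n + 1 : ℕ)) * (a * b * (a * b) ^ n) = (a * b) ^ j := by
      rw [← pow_succ', ← zpow_natCast _ (n + 1), ← zpow_add₀ (mul_ne_zero ha hb), sub_add_cancel,
        zpow_natCast]
    rw [show ((j + 1 : ℕ) : ℤ) - (n + 1 : ℕ) = j - n by push_cast; ring, ← hpow]
    linear_combination qBinomial (a * b) n j * b * (a * b) ^ n * hterm

-- Replacing `(a, b)` by `(a²b, a⁻¹)` keeps `ab` and shifts the series by one index; it trades the
-- factor `1 + a` of the first product for a factor `1 + a⁻¹` of the second.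
lemma qPochhammer_neg_mul_qPochhammer_neg (ha : a ≠ 0) (hb : b ≠ 0) (m n : ℕ) :
    qPochhammer (-a) (a * b) m * qPochhammer (-b) (a * b) n =
      ∑ j ∈ range (m + n + 1), qBinomial (a * b) (m + n) j * thetaTerm a b (j - n) := by
  induction m generalizing a b n with
  | zero => simpa [qPochhammer_zero] using qPochhammer_neg_eq_sum ha hb n
  | succ m ih =>
    have hbase : a * (a * b) * (b / (a * b)) = a * b := by field_simp
    have hprod := ih (mul_ne_zero ha (mul_ne_zero ha hb)) (div_ne_zero hb (mul_ne_zero ha hb))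
      (n + 1)
    rw [hbase, qPochhammer_succ', show -(b / (a * b)) * (a * b) = -b by field_simp] at hprod
    have hterm (j : ℕ) : thetaTerm (a * (a * b)) (b / (a * b)) (j - (n + 1 : ℕ)) * a =
        thetaTerm a b (j - n) := by
      rw [thetaTerm_scale ha b (mul_ne_zero ha hb), mul_assoc, ← thetaTerm_add_one ha hb]
      push_cast
      ring_nf
    rw [show m + 1 + n = m + (n + 1) by ring]
    simp only [← hterm, ← mul_assoc, ← sum_mul]
    simp only [← mul_assoc] at hprod
    rw [← hprod, qPochhammer_succ']
    field_simp
    ring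

lemma qPochhammer_neg_mul_qPochhammer_neg_eq_sum_Icc (ha : a ≠ 0) (hb : b ≠ 0) (n : ℕ) :
    qPochhammer (-a) (a * b) n * qPochhammer (-b) (a * b) n =
      ∑ i ∈ Icc (-n : ℤ) n, qBinomial (a * b) (2 * n) (n + i).toNat * thetaTerm a b i := by
  rw [qPochhammer_neg_mul_qPochhammer_neg ha hb, ← two_mul]
  refine sum_nbij' (fun j => (j : ℤ) - n) (fun i => (n + i).toNat) ?_ ?_ ?_ ?_ ?_
  · intro j hj
    simp only [mem_range, mem_Icc] at hj ⊢
    lia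
  · intro i hi
    simp only [mem_range, mem_Icc] at hi ⊢
    lia
  · intro j _
    lia
  · intro i hi
    simp only [mem_Icc] at hi
    lia
  · intro j _
    simp

lemma thetaTerm_add_mul_thetaTerm_sub (ha : a ≠ 0) (hb : b ≠ 0) (hc : c ≠ 0) (h : a * b = c * d)
    (m n : ℤ) :
    thetaTerm a b (m + n) * thetaTerm c d (m - n) =
      thetaTerm (a * c) (b * d) m * thetaTerm (a * d) (b * c) n := by
  have hab : a * b ≠ 0 := mul_ne_zero ha hb
  obtain rfl : d = a * b / c := by rw [h, mul_div_cancel_left₀ d hc]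
  have hexp : (m + n) * (m + n - 1) / 2 + (m - n) * (m - n - 1) / 2 =
      2 * (m * (m - 1) / 2) + 2 * (n * (n - 1) / 2) + n := by
    linarith [int_mul_pred_ediv_two_mul_two (m + n), int_mul_pred_ediv_two_mul_two (m - n),
      int_mul_pred_ediv_two_mul_two m, int_mul_pred_ediv_two_mul_two n]
  have hpow : (a * b) ^ ((m + n) * (m + n - 1) / 2) * (a * b) ^ ((m - n) * (m - n - 1) / 2) =
      ((a * b) ^ 2) ^ (m * (m - 1) / 2) * ((a * b) ^ 2) ^ (n * (n - 1) / 2) * (a * b) ^ n := by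
    rw [← zpow_add₀ hab, hexp, zpow_add₀ hab, zpow_add₀ hab, zpow_mul, zpow_mul]
    norm_cast
  rw [thetaTerm_eq ha, thetaTerm_eq hc, thetaTerm_eq (mul_ne_zero ha hc),
    thetaTerm_eq (mul_ne_zero ha (div_ne_zero hab hc)),
    show c * (a * b / c) = a * b by field_simp,
    show a * c * (b * (a * b / c)) = (a * b) ^ 2 by field_simp,
    show a * (a * b / c) * (b * c) = (a * b) ^ 2 by field_simp,
    mul_zpow a c, mul_zpow a (a * b / c), div_zpow, zpow_add₀ ha, zpow_sub₀ hc]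
  linear_combination a ^ m * a ^ n * (c ^ m / c ^ n) * hpow

lemma thetaTerm_add_add_one_mul_thetaTerm_sub (ha : a ≠ 0) (hb : b ≠ 0) (hc : c ≠ 0)
    (hd : d ≠ 0) (h : a * b = c * d) (m n : ℤ) :
    thetaTerm a b (m + n + 1) * thetaTerm c d (m - n) =
      a * (thetaTerm (a * c ^ 2 * d) (b / c) m * thetaTerm (a * c * d ^ 2) (b / d) n) := by
  have hab : a * b ≠ 0 := mul_ne_zero ha hb
  have hm : thetaTerm (a * c ^ 2 * d) (b / c) m = thetaTerm (a * c) (b * d) m * (a * b) ^ m := by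
    rw [← thetaTerm_scale (mul_ne_zero ha hc) _ hab, h]
    congr 1 <;> field_simp
  have hn : thetaTerm (a * c * d ^ 2) (b / d) n = thetaTerm (a * d) (b * c) n * (a * b) ^ n := by
    rw [← thetaTerm_scale (mul_ne_zero ha hd) _ hab, h]
    congr 1 <;> field_simp
  rw [thetaTerm_add_one ha hb, hm, hn, zpow_add₀ hab]
  linear_combination a * (a * b) ^ m * (a * b) ^ n *
    thetaTerm_add_mul_thetaTerm_sub ha hb hc h m n

end ThetaTerm

lemma tsum_int_prod_eq_tsum_even_add_tsum_odd {E : Type*} [NormedAddCommGroup E] [CompleteSpace E]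
    {f : ℤ × ℤ → E} (hf : Summable f) :
    ∑' z, f z =
      ∑' z : ℤ × ℤ, f (z.1 + z.2, z.1 - z.2) + ∑' z : ℤ × ℤ, f (z.1 + z.2 + 1, z.1 - z.2) := by
  let even (z : ℤ × ℤ) : ℤ × ℤ := (z.1 + z.2, z.1 - z.2)
  let odd (z : ℤ × ℤ) : ℤ × ℤ := (z.1 + z.2 + 1, z.1 - z.2)
  have heven : Function.Injective even := fun _ _ h => by grind
  have hodd : Function.Injective odd := fun _ _ h => by grind
  have hbij : Function.Bijective (Sum.elim even odd) := by
    refine ⟨heven.sumElim hodd fun _ _ => by grind, fun ⟨i, j⟩ => ?_⟩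
    rcases Int.even_or_odd' (i + j) with ⟨m, hm | hm⟩
    · exact ⟨.inl (m, i - m), by grind⟩
    · exact ⟨.inr (m, i - 1 - m), by grind⟩
  rw [← (Equiv.ofBijective _ hbij).tsum_eq]
  exact ((hf.comp_injective heven).hasSum.sum (hf.comp_injective hodd).hasSum).tsum_eq

lemma tendsto_sum_of_dominated_convergence {α β E : Type*} {l : Filter α}
    [NormedAddCommGroup E] [CompleteSpace E] {s : α → Finset β} {f : α → β → E} {g : β → E}
    {bound : β → ℝ} (h_sum : Summable bound) (hs : ∀ k, ∀ᶠ x in l, k ∈ s x)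
    (hf : ∀ k, Tendsto (f · k) l (𝓝 (g k))) (h_bound : ∀ x k, ‖f x k‖ ≤ bound k) :
    Tendsto (fun x => ∑ k ∈ s x, f x k) l (𝓝 (∑' k, g k)) := by
  simp only [fun x => sum_eq_tsum_indicator (f x) (s x)]
  refine tendsto_tsum_of_dominated_convergence h_sum (fun k => ?_) (.of_forall fun x k => ?_)
  · refine (hf k).congr' ?_
    filter_upwards [hs k] with x hx
    exact (Set.indicator_of_mem (mem_coe.mpr hx) _).symm
  · exact (norm_indicator_le_norm_self _ _).trans (h_bound x k)

/-- The infinite `q`-Pochhammer symbol `(a; q)_∞`, meaningful for `‖q‖ < 1`. -/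
noncomputable def qPochhammerInf {𝕜 : Type*} [NormedField 𝕜] (a q : 𝕜) : 𝕜 :=
  ∏' k : ℕ, (1 - a * q ^ k)

local notation "⦅" a ";" q "⦆∞" => qPochhammerInf a q

section Infinite

variable {𝕜 : Type*} [NormedField 𝕜] {a b c d q : 𝕜}

lemma norm_pow_lt_one (hq : ‖q‖ < 1) {n : ℕ} (hn : n ≠ 0) : ‖q ^ n‖ < 1 := by
  rw [norm_pow]
  exact pow_lt_one₀ (norm_nonneg q) hq hn

lemma tprod_one_sub_pow_mul_add (q : 𝕜) (m r : ℕ) :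
    ∏' k : ℕ, (1 - q ^ (m * k + r)) = ⦅q ^ r; q ^ m⦆∞ :=
  tprod_congr fun k => by ring

lemma summable_norm_neg_mul_pow (a : 𝕜) (hq : ‖q‖ < 1) :
    Summable fun k : ℕ => ‖-(a * q ^ k)‖ := by
  simp only [norm_neg, norm_mul, norm_pow]
  exact (summable_geometric_of_lt_one (norm_nonneg q) hq).mul_left ‖a‖

lemma one_sub_mul_pow_ne_zero (ha : ‖a‖ < 1) (hq : ‖q‖ ≤ 1) (k : ℕ) : 1 - a * q ^ k ≠ 0 := by
  refine sub_ne_zero.mpr fun h => ?_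
  have hlt : ‖a * q ^ k‖ < 1 := by
    rw [norm_mul, norm_pow]
    exact mul_lt_one_of_nonneg_of_lt_one_left (norm_nonneg a) ha (pow_le_one₀ (norm_nonneg q) hq)
  rw [← h, norm_one] at hlt
  exact hlt.false

lemma qPochhammer_ne_zero (ha : ‖a‖ < 1) (hq : ‖q‖ ≤ 1) (n : ℕ) : qPochhammer a q n ≠ 0 :=
  prod_ne_zero_iff.mpr fun k _ => one_sub_mul_pow_ne_zero ha hq k

lemma qBinomial_eq_div (hq : ‖q‖ < 1) (m n : ℕ) :
    qBinomial q (m + n) m =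
      qPochhammer q q (m + n) * ((qPochhammer q q m)⁻¹ * (qPochhammer q q n)⁻¹) := by
  have hm := qPochhammer_ne_zero hq hq.le m
  have hn := qPochhammer_ne_zero hq hq.le n
  rw [← qBinomial_mul_qPochhammer]
  field_simp

/-- Ramanujan's theta function `f(a, b) = ∑ᵢ a ^ (i(i+1)/2) * b ^ (i(i-1)/2)`, meaningful for
`‖a * b‖ < 1`. -/
noncomputable def ramanujanTheta (a b : 𝕜) : 𝕜 := ∑' i : ℤ, thetaTerm a b i

lemma ramanujanTheta_comm (a b : 𝕜) : ramanujanTheta a b = ramanujanTheta b a := by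
  rw [ramanujanTheta, ← (Equiv.neg ℤ).tsum_eq]
  simp only [Equiv.neg_apply, thetaTerm_neg, ramanujanTheta]

lemma summable_norm_thetaTerm_natCast (ha : a ≠ 0) (hb : b ≠ 0) (hab : ‖a * b‖ < 1) :
    Summable fun n : ℕ => ‖thetaTerm a b n‖ := by
  have hne (n : ℕ) : ‖thetaTerm a b n‖ ≠ 0 := norm_ne_zero_iff.mpr (thetaTerm_ne_zero ha hb n)
  refine summable_of_ratio_test_tendsto_lt_one zero_lt_one (.of_forall hne) ?_
  have hlim := (tendsto_pow_atTop_nhds_zero_of_lt_one (norm_nonneg _) hab).mul_const ‖a‖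
  rw [zero_mul] at hlim
  refine hlim.congr fun n => ?_
  rw [norm_norm, norm_norm, Nat.cast_succ, thetaTerm_add_one ha hb, norm_mul (thetaTerm a b n),
    mul_div_cancel_left₀ _ (hne n), norm_mul _ a, zpow_natCast, norm_pow]

lemma summable_norm_thetaTerm (ha : a ≠ 0) (hb : b ≠ 0) (hab : ‖a * b‖ < 1) :
    Summable fun i : ℤ => ‖thetaTerm a b i‖ := by
  refine .of_nat_of_neg (summable_norm_thetaTerm_natCast ha hb hab) ?_
  simpa only [thetaTerm_neg] using summable_norm_thetaTerm_natCast hb ha (mul_comm a b ▸ hab)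

variable [CompleteSpace 𝕜]

lemma multipliable_one_sub_mul_pow (a : 𝕜) (hq : ‖q‖ < 1) :
    Multipliable fun k : ℕ => 1 - a * q ^ k := by
  simpa only [sub_eq_add_neg] using
    multipliable_one_add_of_summable (summable_norm_neg_mul_pow a hq)

lemma tendsto_qPochhammer (a : 𝕜) (hq : ‖q‖ < 1) :
    Tendsto (qPochhammer a q) atTop (𝓝 ⦅a; q⦆∞) :=
  (multipliable_one_sub_mul_pow a hq).hasProd.tendsto_prod_nat

lemma qPochhammerInf_ne_zero (ha : ‖a‖ < 1) (hq : ‖q‖ < 1) : ⦅a; q⦆∞ ≠ 0 := by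
  simp only [qPochhammerInf, sub_eq_add_neg]
  refine tprod_one_add_ne_zero_of_summable (fun k => ?_) (summable_norm_neg_mul_pow a hq)
  simpa only [sub_eq_add_neg] using one_sub_mul_pow_ne_zero ha hq.le k

lemma qPochhammerInf_pow_ne_zero (hq : ‖q‖ < 1) {m n : ℕ} (hm : m ≠ 0) (hn : n ≠ 0) :
    ⦅q ^ m; q ^ n⦆∞ ≠ 0 :=
  qPochhammerInf_ne_zero (norm_pow_lt_one hq hm) (norm_pow_lt_one hq hn)

lemma qPochhammerInf_eq_one_sub_mul (a : 𝕜) (hq : ‖q‖ < 1) :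
    ⦅a; q⦆∞ = (1 - a) * ⦅a * q; q⦆∞ := by
  refine tendsto_nhds_unique ((tendsto_qPochhammer a hq).comp (tendsto_add_atTop_nat 1)) ?_
  simpa only [Function.comp_def, qPochhammer_succ'] using
    (tendsto_qPochhammer (a * q) hq).const_mul (1 - a)

lemma qPochhammerInf_eq_prod_range (a : 𝕜) (hq : ‖q‖ < 1) {m : ℕ} (hm : m ≠ 0) :
    ⦅a; q⦆∞ = ∏ r ∈ range m, ⦅a * q ^ r; q ^ m⦆∞ := by
  have hsub := (tendsto_qPochhammer a hq).comp
    (tendsto_id.const_mul_atTop' (Nat.pos_of_ne_zero hm))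
  refine tendsto_nhds_unique hsub ?_
  simpa only [Function.comp_def, id, qPochhammer_mul_length] using
    tendsto_finsetProd (range m) fun r _ =>
      tendsto_qPochhammer (a * q ^ r) (norm_pow_lt_one hq hm)

lemma qPochhammerInf_bisect (a : 𝕜) (hq : ‖q‖ < 1) :
    ⦅a; q⦆∞ = ⦅a; q ^ 2⦆∞ * ⦅a * q; q ^ 2⦆∞ := by
  simp [qPochhammerInf_eq_prod_range a hq two_ne_zero, prod_range_succ]

lemma qPochhammerInf_quintisect (a : 𝕜) (hq : ‖q‖ < 1) :
    ⦅a; q⦆∞ = ⦅a; q ^ 5⦆∞ * ⦅a * q; q ^ 5⦆∞ * ⦅a * q ^ 2; q ^ 5⦆∞ * ⦅a * q ^ 3; q ^ 5⦆∞ *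
      ⦅a * q ^ 4; q ^ 5⦆∞ := by
  simp [qPochhammerInf_eq_prod_range a hq (NeZero.ne 5), prod_range_succ]

lemma qPochhammerInf_mul_neg (a : 𝕜) (hq : ‖q‖ < 1) :
    ⦅a; q⦆∞ * ⦅-a; q⦆∞ = ⦅a ^ 2; q ^ 2⦆∞ := by
  rw [qPochhammerInf, qPochhammerInf, ← (multipliable_one_sub_mul_pow a hq).tprod_mul
    (multipliable_one_sub_mul_pow (-a) hq)]
  exact tprod_congr fun k => by ring

lemma qPochhammerInf_odd_mul_qPochhammerInf_neg (hq : ‖q‖ < 1) :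
    ⦅q; q ^ 2⦆∞ * ⦅-q; q⦆∞ = 1 := by
  have hsq := qPochhammerInf_mul_neg q hq
  rw [qPochhammerInf_bisect q hq, ← pow_two] at hsq
  apply mul_left_cancel₀ (qPochhammerInf_pow_ne_zero hq two_ne_zero two_ne_zero)
  linear_combination hsq

lemma exists_norm_qBinomial_le (hq : ‖q‖ < 1) : ∃ C : ℝ, ∀ n k, ‖qBinomial q n k‖ ≤ C := by
  have htendsto := tendsto_qPochhammer q hq
  obtain ⟨A, hA⟩ := htendsto.norm.bddAbove_range
  obtain ⟨B, hB⟩ := (htendsto.inv₀ (qPochhammerInf_ne_zero hq hq)).norm.bddAbove_range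
  have hA' (n : ℕ) : ‖qPochhammer q q n‖ ≤ A := hA ⟨n, rfl⟩
  have hB' (n : ℕ) : ‖(qPochhammer q q n)⁻¹‖ ≤ B := hB ⟨n, rfl⟩
  have hA0 : 0 ≤ A := (norm_nonneg _).trans (hA' 0)
  have hB0 : 0 ≤ B := (norm_nonneg _).trans (hB' 0)
  refine ⟨A * (B * B), fun n k => ?_⟩
  rcases lt_or_ge n k with hlt | hle
  · rw [qBinomial_eq_zero_of_lt q hlt, norm_zero]
    positivity
  · obtain ⟨m, rfl⟩ := Nat.exists_eq_add_of_le hle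
    rw [qBinomial_eq_div hq, norm_mul, norm_mul]
    gcongr
    exacts [hA' _, hB' _, hB' _]

lemma tendsto_qBinomial_add (hq : ‖q‖ < 1) {α : Type*} {l : Filter α} {m n : α → ℕ}
    (hm : Tendsto m l atTop) (hn : Tendsto n l atTop) :
    Tendsto (fun x => qBinomial q (m x + n x) (m x)) l (𝓝 ⦅q; q⦆∞⁻¹) := by
  have hne := qPochhammerInf_ne_zero hq hq
  have htendsto := tendsto_qPochhammer q hq
  have hinv := htendsto.inv₀ hne
  have hlim := (htendsto.comp (hm.atTop_add_atTop hn)).mul ((hinv.comp hm).mul (hinv.comp hn))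
  rw [mul_inv_cancel_left₀ hne] at hlim
  simpa only [Function.comp_def, ← qBinomial_eq_div hq] using hlim

lemma tendsto_qBinomial_central (hq : ‖q‖ < 1) (i : ℤ) :
    Tendsto (fun n : ℕ => qBinomial q (2 * n) (n + i).toNat) atTop (𝓝 ⦅q; q⦆∞⁻¹) := by
  have htop (i : ℤ) : Tendsto (fun n : ℕ => ((n : ℤ) + i).toNat) atTop atTop := by
    refine tendsto_atTop.mpr fun b => ?_
    filter_upwards [eventually_ge_atTop (b + i.natAbs)] with n hn
    lia
  refine (tendsto_qBinomial_add hq (htop i) (htop (-i))).congr' ?_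
  filter_upwards [eventually_ge_atTop i.natAbs] with n hn
  congr 1
  lia

theorem ramanujanTheta_eq_qPochhammerInf (ha : a ≠ 0) (hb : b ≠ 0) (hab : ‖a * b‖ < 1) :
    ramanujanTheta a b = ⦅-a; a * b⦆∞ * ⦅-b; a * b⦆∞ * ⦅a * b; a * b⦆∞ := by
  obtain ⟨C, hC⟩ := exists_norm_qBinomial_le hab
  have hprod := (tendsto_qPochhammer (-a) hab).mul (tendsto_qPochhammer (-b) hab)
  simp only [qPochhammer_neg_mul_qPochhammer_neg_eq_sum_Icc ha hb] at hprod
  have hsum : Tendsto (fun n : ℕ =>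
      ∑ i ∈ Icc (-n : ℤ) n, qBinomial (a * b) (2 * n) (n + i).toNat * thetaTerm a b i) atTop
      (𝓝 (∑' i, ⦅a * b; a * b⦆∞⁻¹ * thetaTerm a b i)) := by
    refine tendsto_sum_of_dominated_convergence
      ((summable_norm_thetaTerm ha hb hab).mul_left C) (fun i => ?_)
      (fun i => (tendsto_qBinomial_central hab i).mul_const _) (fun n i => ?_)
    · filter_upwards [eventually_ge_atTop i.natAbs] with n hn
      rw [mem_Icc]
      lia
    · rw [norm_mul]
      gcongr
      exact hC _ _
  rw [tendsto_nhds_unique hprod hsum, tsum_mul_left, ramanujanTheta]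
  field_simp [qPochhammerInf_ne_zero hab hab]

lemma ramanujanTheta_mul_eq_tsum_prod (ha : a ≠ 0) (hb : b ≠ 0) (hab : ‖a * b‖ < 1)
    (hc : c ≠ 0) (hd : d ≠ 0) (hcd : ‖c * d‖ < 1) :
    ramanujanTheta a b * ramanujanTheta c d =
      ∑' z : ℤ × ℤ, thetaTerm a b z.1 * thetaTerm c d z.2 :=
  tsum_mul_tsum_of_summable_norm (summable_norm_thetaTerm ha hb hab)
    (summable_norm_thetaTerm hc hd hcd)

lemma ramanujanTheta_mul_eq_tsum_even_add_tsum_odd (ha : a ≠ 0) (hb : b ≠ 0)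
    (hab : ‖a * b‖ < 1) (hc : c ≠ 0) (hd : d ≠ 0) (hcd : ‖c * d‖ < 1) :
    ramanujanTheta a b * ramanujanTheta c d =
      ∑' z : ℤ × ℤ, thetaTerm a b (z.1 + z.2) * thetaTerm c d (z.1 - z.2) +
        ∑' z : ℤ × ℤ, thetaTerm a b (z.1 + z.2 + 1) * thetaTerm c d (z.1 - z.2) := by
  rw [ramanujanTheta_mul_eq_tsum_prod ha hb hab hc hd hcd]
  exact tsum_int_prod_eq_tsum_even_add_tsum_odd
    (summable_mul_of_summable_norm (summable_norm_thetaTerm ha hb hab)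
      (summable_norm_thetaTerm hc hd hcd))

theorem ramanujanTheta_mul_ramanujanTheta (ha : a ≠ 0) (hb : b ≠ 0) (hc : c ≠ 0) (hd : d ≠ 0)
    (h : a * b = c * d) (hab : ‖a * b‖ < 1) :
    ramanujanTheta a b * ramanujanTheta c d =
      ramanujanTheta (a * c) (b * d) * ramanujanTheta (a * d) (b * c) +
        a * (ramanujanTheta (b / c) (a * c ^ 2 * d) * ramanujanTheta (b / d) (a * c * d ^ 2)) := by
  have hcd : ‖c * d‖ < 1 := by rwa [← h]
  have hlt {x : 𝕜} (hx : x = (a * b) ^ 2) : ‖x‖ < 1 := by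
    rw [hx]
    exact norm_pow_lt_one hab two_ne_zero
  have heven := ramanujanTheta_mul_eq_tsum_prod
    (mul_ne_zero ha hc) (mul_ne_zero hb hd) (hlt (by linear_combination -(a * b) * h))
    (mul_ne_zero ha hd) (mul_ne_zero hb hc) (hlt (by linear_combination -(a * b) * h))
  have hodd := ramanujanTheta_mul_eq_tsum_prod
    (mul_ne_zero (mul_ne_zero ha (pow_ne_zero 2 hc)) hd) (div_ne_zero hb hc)
    (hlt (by field_simp; linear_combination -h))
    (mul_ne_zero (mul_ne_zero ha hc) (pow_ne_zero 2 hd)) (div_ne_zero hb hd)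
    (hlt (by field_simp; linear_combination -h))
  rw [ramanujanTheta_mul_eq_tsum_even_add_tsum_odd ha hb hab hc hd hcd, heven,
    ramanujanTheta_comm (b / c), ramanujanTheta_comm (b / d), hodd, ← tsum_mul_left]
  simp only [thetaTerm_add_mul_thetaTerm_sub ha hb hc h,
    thetaTerm_add_add_one_mul_thetaTerm_sub ha hb hc hd h]

lemma ramanujanTheta_neg_pow (hq0 : q ≠ 0) (hq : ‖q‖ < 1) {m n : ℕ} (h : m + n ≠ 0) :
    ramanujanTheta (-q ^ m) (-q ^ n) =
      ⦅q ^ m; q ^ (m + n)⦆∞ * ⦅q ^ n; q ^ (m + n)⦆∞ * ⦅q ^ (m + n); q ^ (m + n)⦆∞ := by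
  have hmul : -q ^ m * -q ^ n = q ^ (m + n) := by ring
  rw [ramanujanTheta_eq_qPochhammerInf (neg_ne_zero.mpr (pow_ne_zero m hq0))
    (neg_ne_zero.mpr (pow_ne_zero n hq0)), hmul, neg_neg, neg_neg]
  rw [hmul]
  exact norm_pow_lt_one hq h

lemma ramanujanTheta_mul_neg (ha : a ≠ 0) (hb : b ≠ 0) (hab : ‖a * b‖ < 1) :
    ramanujanTheta a b * ramanujanTheta (-a) (-b) * ⦅(a * b) ^ 2; (a * b) ^ 2⦆∞ =
      ramanujanTheta (-a ^ 2) (-b ^ 2) * ⦅a * b; a * b⦆∞ ^ 2 := by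
  have hsq : -a ^ 2 * -b ^ 2 = (a * b) ^ 2 := by ring
  rw [ramanujanTheta_eq_qPochhammerInf ha hb hab,
    ramanujanTheta_eq_qPochhammerInf (neg_ne_zero.mpr ha) (neg_ne_zero.mpr hb)
      (by rwa [neg_mul_neg]),
    ramanujanTheta_eq_qPochhammerInf (neg_ne_zero.mpr (pow_ne_zero 2 ha))
      (neg_ne_zero.mpr (pow_ne_zero 2 hb)) (hsq ▸ norm_pow_lt_one hab two_ne_zero),
    neg_mul_neg, hsq]
  simp only [neg_neg, ← qPochhammerInf_mul_neg _ hab]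
  ring

lemma ramanujanTheta_quintic (hq0 : q ≠ 0) (hq : ‖q‖ < 1) :
    ramanujanTheta (-q) (-q ^ 4) * ramanujanTheta (-q ^ 2) (-q ^ 3) =
      ⦅q; q⦆∞ * ⦅q ^ 5; q ^ 5⦆∞ := by
  have h14 := ramanujanTheta_neg_pow hq0 hq (m := 1) (n := 4) (by norm_num)
  rw [pow_one] at h14
  rw [h14, ramanujanTheta_neg_pow hq0 hq (by norm_num),
    qPochhammerInf_quintisect q hq]
  ring_nf

lemma ramanujanTheta_decic (hq0 : q ≠ 0) (hq : ‖q‖ < 1) :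
    ramanujanTheta (-q) (-q ^ 9) * ramanujanTheta (-q ^ 3) (-q ^ 7) * ⦅q ^ 5; q ^ 10⦆∞ =
      ⦅q; q ^ 2⦆∞ * ⦅q ^ 10; q ^ 10⦆∞ ^ 2 := by
  have h19 := ramanujanTheta_neg_pow hq0 hq (m := 1) (n := 9) (by norm_num)
  rw [pow_one] at h19
  rw [h19, ramanujanTheta_neg_pow hq0 hq (by norm_num),
    qPochhammerInf_quintisect q (norm_pow_lt_one hq two_ne_zero)]
  ring_nf

lemma qPochhammerInf_decic (hq0 : q ≠ 0) (hq : ‖q‖ < 1) :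
    ⦅q; q ^ 5⦆∞ * ⦅q ^ 4; q ^ 5⦆∞ * (⦅q ^ 2; -q ^ 5⦆∞ * ⦅-q ^ 3; -q ^ 5⦆∞) *
        ⦅q ^ 10; q ^ 10⦆∞ ^ 3 =
      ramanujanTheta (-q) (-q ^ 9) * ramanujanTheta (q ^ 3) (q ^ 7) * ⦅q ^ 2; q ^ 2⦆∞ := by
  have hq5 : ‖q ^ 5‖ < 1 := norm_pow_lt_one hq (by norm_num)
  have hq5' : ‖-q ^ 5‖ < 1 := by rwa [norm_neg]
  have h37 : q ^ 3 * q ^ 7 = q ^ 10 := by ring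
  have h19 := ramanujanTheta_neg_pow hq0 hq (m := 1) (n := 9) (by norm_num)
  rw [pow_one] at h19
  rw [h19, ramanujanTheta_eq_qPochhammerInf (pow_ne_zero 3 hq0) (pow_ne_zero 7 hq0)
      (h37 ▸ norm_pow_lt_one hq (by norm_num)), h37,
    qPochhammerInf_bisect q hq5, qPochhammerInf_bisect (q ^ 4) hq5,
    qPochhammerInf_bisect (q ^ 2) hq5', qPochhammerInf_bisect (-q ^ 3) hq5',
    qPochhammerInf_quintisect (q ^ 2) (norm_pow_lt_one hq two_ne_zero)]
  ring_nf

end Infinite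

section Watson

variable {q : ℂ}

lemma ramanujanTheta_one_right (hq0 : q ≠ 0) (hq : ‖q‖ < 1) :
    ramanujanTheta q 1 = 2 * rpsi q := by
  have hpos (n : ℕ) : thetaTerm q 1 n = q ^ (n * (n + 1) / 2) := by
    rw [thetaTerm, one_zpow, mul_one]
    exact_mod_cast zpow_natCast q (n * (n + 1) / 2)
  have hneg (n : ℕ) : thetaTerm q 1 (-(n + 1)) = q ^ (n * (n + 1) / 2) := by
    rw [thetaTerm_neg, thetaTerm, one_zpow, one_mul, add_sub_cancel_right, mul_comm]
    exact_mod_cast zpow_natCast q (n * (n + 1) / 2)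
  have hs : Summable fun n : ℕ => q ^ (n * (n + 1) / 2) := by
    simpa only [hpos] using
      (summable_norm_thetaTerm_natCast hq0 one_ne_zero (by rwa [mul_one])).of_norm
  rw [ramanujanTheta, tsum_of_nat_of_neg_add_one (by simpa only [hpos] using hs)
    (by simpa only [hneg] using hs), two_mul]
  simp only [hpos, hneg, rpsi]

lemma rpsi_mul_qPochhammerInf (hq0 : q ≠ 0) (hq : ‖q‖ < 1) :
    rpsi q * ⦅q; q ^ 2⦆∞ = ⦅q ^ 2; q ^ 2⦆∞ := by
  have hjacobi := ramanujanTheta_eq_qPochhammerInf hq0 one_ne_zero (by rwa [mul_one])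
  rw [ramanujanTheta_one_right hq0 hq, mul_one, qPochhammerInf_eq_one_sub_mul (-1) hq,
    neg_one_mul] at hjacobi
  have hrpsi : rpsi q = ⦅-q; q⦆∞ ^ 2 * ⦅q; q⦆∞ := by linear_combination hjacobi / 2
  rw [hrpsi, ← qPochhammerInf_mul_neg q hq]
  linear_combination ⦅-q; q⦆∞ * ⦅q; q⦆∞ * qPochhammerInf_odd_mul_qPochhammerInf_neg hq

lemma ramanujanTheta_mul_eq_rpsi (hq0 : q ≠ 0) (hq : ‖q‖ < 1) :
    ramanujanTheta q (q ^ 9) * ramanujanTheta (-q ^ 3) (-q ^ 7) =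
      ⦅q ^ 2; q ^ 4⦆∞ * ⦅q ^ 20; q ^ 20⦆∞ * (rpsi (q ^ 2) + q * rpsi (q ^ 10)) := by
  have hne (n : ℕ) : q ^ n ≠ 0 := pow_ne_zero n hq0
  have hlt {n : ℕ} (hn : n ≠ 0) : ‖q ^ n‖ < 1 := norm_pow_lt_one hq hn
  have heven : ramanujanTheta (-q ^ 4) (-q ^ 16) * ramanujanTheta (-q ^ 8) (-q ^ 12) =
      ⦅q ^ 2; q ^ 4⦆∞ * ⦅q ^ 20; q ^ 20⦆∞ * rpsi (q ^ 2) := by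
    have hquintic := ramanujanTheta_quintic (hne 4) (hlt four_ne_zero)
    have hrpsi := rpsi_mul_qPochhammerInf (hne 2) (hlt two_ne_zero)
    ring_nf at hquintic hrpsi ⊢
    linear_combination hquintic - ⦅q ^ 20; q ^ 20⦆∞ * hrpsi
  have hodd : ramanujanTheta (-q ^ 6) (-q ^ 14) * ramanujanTheta (-q ^ 2) (-q ^ 18) =
      ⦅q ^ 2; q ^ 4⦆∞ * ⦅q ^ 20; q ^ 20⦆∞ * rpsi (q ^ 10) := by
    have hdecic := ramanujanTheta_decic (hne 2) (hlt two_ne_zero)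
    have hrpsi := rpsi_mul_qPochhammerInf (hne 10) (hlt (by norm_num))
    have hcancel : ⦅q ^ 10; q ^ 20⦆∞ ≠ 0 :=
      qPochhammerInf_pow_ne_zero hq (by norm_num) (by norm_num)
    apply mul_right_cancel₀ hcancel
    ring_nf at hdecic hrpsi ⊢
    linear_combination hdecic - ⦅q ^ 2; q ^ 4⦆∞ * ⦅q ^ 20; q ^ 20⦆∞ * hrpsi
  have hsplit := ramanujanTheta_mul_ramanujanTheta hq0 (hne 9) (neg_ne_zero.mpr (hne 3))
    (neg_ne_zero.mpr (hne 7)) (by ring) (by simpa only [← pow_succ'] using hlt (by norm_num))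
  have hdiv₃ : q ^ 9 / -q ^ 3 = -q ^ 6 := by field_simp
  have hdiv₇ : q ^ 9 / -q ^ 7 = -q ^ 2 := by field_simp
  rw [hdiv₃, hdiv₇] at hsplit
  ring_nf at heven hodd hsplit ⊢
  linear_combination hsplit + heven + q * hodd

lemma ramanujanTheta_mul_rpsi (hq0 : q ≠ 0) (hq : ‖q‖ < 1) :
    ramanujanTheta (-q) (-q ^ 9) * ramanujanTheta (q ^ 3) (q ^ 7) *
        (rpsi (q ^ 2) + q * rpsi (q ^ 10)) = ⦅q ^ 10; q ^ 10⦆∞ ^ 3 := by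
  have hne (n : ℕ) : q ^ n ≠ 0 := pow_ne_zero n hq0
  have hlt {n : ℕ} (hn : n ≠ 0) : ‖q ^ n‖ < 1 := norm_pow_lt_one hq hn
  have h19 : q * q ^ 9 = q ^ 10 := by ring
  have h37 : q ^ 3 * q ^ 7 = q ^ 10 := by ring
  have hneg₁ := ramanujanTheta_mul_neg hq0 (hne 9) (by rw [h19]; exact hlt (by norm_num))
  have hneg₃ := ramanujanTheta_mul_neg (hne 3) (hne 7) (by rw [h37]; exact hlt (by norm_num))
  rw [h19] at hneg₁
  rw [h37] at hneg₃
  have hneg := congrArg₂ (· * ·) hneg₁ hneg₃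
  have hmul := ramanujanTheta_mul_eq_rpsi hq0 hq
  have hdecic := ramanujanTheta_decic (hne 2) (hlt two_ne_zero)
  have hbisect := qPochhammerInf_bisect (q ^ 10) (hlt (n := 10) (by norm_num))
  have hcancel : ⦅q ^ 2; q ^ 4⦆∞ * ⦅q ^ 20; q ^ 20⦆∞ ^ 3 * ⦅q ^ 10; q ^ 20⦆∞ ≠ 0 := by
    refine mul_ne_zero (mul_ne_zero ?_ (pow_ne_zero 3 ?_)) ?_ <;>
      exact qPochhammerInf_pow_ne_zero hq (by norm_num) (by norm_num)
  apply mul_left_cancel₀ hcancel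
  ring_nf at hneg hmul hdecic hbisect ⊢
  linear_combination ⦅q ^ 10; q ^ 20⦆∞ * hneg -
    ramanujanTheta (-q) (-q ^ 9) * ramanujanTheta (q ^ 3) (q ^ 7) * ⦅q ^ 20; q ^ 20⦆∞ ^ 2 *
      ⦅q ^ 10; q ^ 20⦆∞ * hmul +
    ⦅q ^ 10; q ^ 10⦆∞ ^ 4 * hdecic +
    ⦅q ^ 10; q ^ 10⦆∞ ^ 3 * ⦅q ^ 2; q ^ 4⦆∞ * ⦅q ^ 20; q ^ 20⦆∞ ^ 2 * hbisect

lemma rpsi_zero : rpsi 0 = 1 := by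
  have hne {n : ℕ} (hn : n ≠ 0) : n * (n + 1) / 2 ≠ 0 := by
    have : 1 ≤ n := Nat.pos_of_ne_zero hn
    have : 2 ≤ n * (n + 1) := by nlinarith
    lia
  rw [rpsi, tsum_eq_single 0 fun n hn => zero_pow (hne hn), zero_mul, Nat.zero_div, pow_zero]

lemma RRG_eq_one_div (q : ℂ) : RRG q = 1 / (⦅q; q ^ 5⦆∞ * ⦅q ^ 4; q ^ 5⦆∞) := by
  rw [RRG, tprod_one_sub_pow_mul_add, tprod_one_sub_pow_mul_add, pow_one]

lemma RRH_eq_one_div (q : ℂ) : RRH q = 1 / (⦅q ^ 2; q ^ 5⦆∞ * ⦅q ^ 3; q ^ 5⦆∞) := by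
  rw [RRH, tprod_one_sub_pow_mul_add, tprod_one_sub_pow_mul_add]

theorem RRG_mul_RRH_neg (hq : ‖q‖ < 1) :
    RRG q * RRH (-q) =
      (rpsi (q ^ 2) + q * rpsi (q ^ 10)) / ∏' n : ℕ, (1 - q ^ (2 * n + 2)) := by
  rcases eq_or_ne q 0 with rfl | hq0
  · simp [RRG, RRH, rpsi_zero]
  have htheta := ramanujanTheta_mul_rpsi hq0 hq
  have hprod := qPochhammerInf_decic hq0 hq
  have h3 : (-q) ^ 3 = -q ^ 3 := by ring
  have h5 : (-q) ^ 5 = -q ^ 5 := by ring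
  have hne10 : ⦅q ^ 10; q ^ 10⦆∞ ^ 3 ≠ 0 :=
    pow_ne_zero 3 (qPochhammerInf_pow_ne_zero hq (by norm_num) (by norm_num))
  have hne2 : ⦅q ^ 2; q ^ 2⦆∞ ≠ 0 := qPochhammerInf_pow_ne_zero hq two_ne_zero two_ne_zero
  have hnetheta := left_ne_zero_of_mul (htheta.trans_ne hne10)
  have hneRR := left_ne_zero_of_mul (hprod.trans_ne (mul_ne_zero hnetheta hne2))
  rw [tprod_one_sub_pow_mul_add, RRG_eq_one_div, RRH_eq_one_div, neg_sq, h3, h5, div_mul_div_comm,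
    one_mul, div_eq_div_iff hneRR hne2]
  apply mul_left_cancel₀ hnetheta
  linear_combination -hprod -
    ⦅q; q ^ 5⦆∞ * ⦅q ^ 4; q ^ 5⦆∞ * (⦅q ^ 2; -q ^ 5⦆∞ * ⦅-q ^ 3; -q ^ 5⦆∞) * htheta

end Watson
/-- Watson's identities:
`G(q)H(−q) + G(−q)H(q) = 2ψ(q²)/(q²;q²)_∞` and
`G(q)H(−q) − G(−q)H(q) = 2qψ(q¹⁰)/(q²;q²)_∞`. -/
theorem watson_GH (q : ℂ) (hq : ‖q‖ < 1) :
    RRG q * RRH (-q) + RRG (-q) * RRH q =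
        2 * rpsi (q ^ 2) / ∏' n : ℕ, (1 - q ^ (2 * n + 2)) ∧
      RRG q * RRH (-q) - RRG (-q) * RRH q =
        2 * q * rpsi (q ^ 10) / ∏' n : ℕ, (1 - q ^ (2 * n + 2)) := by
  have hneg := RRG_mul_RRH_neg (q := -q) (by rwa [norm_neg])
  have hprod (n : ℕ) : (-q) ^ (2 * n + 2) = q ^ (2 * n + 2) := Even.neg_pow ⟨n + 1, by ring⟩ q
  have hten : (-q) ^ 10 = q ^ 10 := by ring
  simp only [hprod, hten, neg_neg, neg_sq] at hneg
  rw [RRG_mul_RRH_neg hq, hneg]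
  constructor <;> ring
end

section
/- The Borwein cubic theta functions satisfy a(q)³ = b(q)³ + c(q)³, where a(q)=∑_{m,n∈ℤ} q^{n²+nm+m²}, b(q)=∑_{m,n∈ℤ} ω^{n−m} q^{n²+nm+m²} with ω=e^{2πi/3}, and c(q)=∑_{m,n∈ℤ} q^{(n+1/3)²+(n+1/3)(m+1/3)+(m+1/3)²}. -/
/-- The Borwein cubic theta function `a(q) = ∑_{m,n ∈ ℤ} q^(m²+mn+n²)`. -/
noncomputable def borweinA (q : ℂ) : ℂ :=
  ∑' p : ℤ × ℤ, q ^ (p.1 ^ 2 + p.1 * p.2 + p.2 ^ 2)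

/-- The Borwein cubic theta function
`b(q) = ∑_{m,n ∈ ℤ} ω^(n−m) q^(m²+mn+n²)`, `ω = e^{2πi/3}`. -/
noncomputable def borweinB (q : ℂ) : ℂ :=
  ∑' p : ℤ × ℤ, Complex.exp (2 * Real.pi * Complex.I / 3) ^ (p.2 - p.1) *
    q ^ (p.1 ^ 2 + p.1 * p.2 + p.2 ^ 2)

/-- The Borwein cubic theta function
`c(q) = ∑_{m,n ∈ ℤ} q^((m+1/3)²+(m+1/3)(n+1/3)+(n+1/3)²)` (complex powers). -/
noncomputable def borweinC (q : ℂ) : ℂ :=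
  ∑' p : ℤ × ℤ, q ^ ((((p.1 : ℂ) + 1/3) ^ 2 + ((p.1 : ℂ) + 1/3) * ((p.2 : ℂ) + 1/3) +
    ((p.2 : ℂ) + 1/3) ^ 2))

/-!
Let `θ` be a prime of norm 3 in the Eisenstein integers, `χ` the reduction modulo `θ` and
`r = q^(1/3)`. Then `a`, `b`, `c` are the sums of `q^N(z)`, `ψ(χ z) q^N(z)` and `r^N(θz + 1)`, where
`ψ` is a nontrivial character of `ℤ/3`. On triples write `N` and `χ` for the sums over the
coordinates. In `a³ - b³` the terms with `χ v = 0` cancel, and `v ↦ -v` exchanges `χ v = 1` and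
`χ v = -1`, so `a³ - b³` is `3` times the sum of `q^N(v)` over `χ v = 1`. In `c³`, multiplying one
coordinate `θw + 1` by a cube root of unity shifts `χ w` by `1`, so `c³` is `3` times the sum of
`r^N(θw + 1)` over `χ w = 0`. The discrete Fourier transform on three points multiplies `N` by `3`
(Parseval) and carries the triples with `χ v = 1` bijectively onto the triples `θw + 1` with
`χ w = 0`; hence the two sums are equal.
-/

lemma summable_mul_mul_of_summable_norm {α R : Type*} [NormedRing R] [CompleteSpace R]
    {f : α → R} (hf : Summable fun a => ‖f a‖) :
    Summable fun x : α × α × α => f x.1 * (f x.2.1 * f x.2.2) :=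
  (hf.mul_norm (hf.mul_norm hf)).of_norm

lemma tsum_pow_three_of_summable_norm {α R : Type*} [NormedRing R] [CompleteSpace R]
    {f : α → R} (hf : Summable fun a => ‖f a‖) :
    (∑' a, f a) ^ 3 = ∑' x : α × α × α, f x.1 * (f x.2.1 * f x.2.2) := by
  rw [pow_succ', pow_two, tsum_mul_tsum_of_summable_norm hf hf,
    tsum_mul_tsum_of_summable_norm hf (hf.mul_norm hf)]

lemma tsum_eq_nsmul_tsum_fiber_zero {α R : Type*} [AddCommGroup R] [UniformSpace R]
    [IsUniformAddGroup R] [CompleteSpace R] [T2Space R] {n : ℕ} [NeZero n] {f : α → R}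
    (hf : Summable f) (κ : α → ZMod n) (ρ : α ≃ α) (hκ : ∀ a, κ (ρ a) = κ a + 1)
    (hfρ : ∀ a, f (ρ a) = f a) :
    ∑' a, f a = n • ∑' a : κ ⁻¹' {0}, f a := by
  have fiber_succ (j : ZMod n) : ∑' a : κ ⁻¹' {j + 1}, f a = ∑' a : κ ⁻¹' {j}, f a := by
    have image_eq : κ ⁻¹' {j + 1} = ρ '' (κ ⁻¹' {j}) := by
      ext a
      obtain ⟨b, rfl⟩ := ρ.surjective a
      simp [hκ]
    rw [image_eq, tsum_image f ρ.injective.injOn]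
    simp only [hfρ]
  have fiber_natCast (k : ℕ) : ∑' a : κ ⁻¹' {(k : ZMod n)}, f a = ∑' a : κ ⁻¹' {0}, f a := by
    induction k with
    | zero => rw [Nat.cast_zero]
    | succ k ih => rw [Nat.cast_succ, fiber_succ, ih]
  have fiber_eq (j : ZMod n) : ∑' a : κ ⁻¹' {j}, f a = ∑' a : κ ⁻¹' {0}, f a := by
    rw [← ZMod.natCast_zmod_val j, fiber_natCast]
  rw [← (hf.hasSum.tsum_fiberwise κ).tsum_eq]
  simp [fiber_eq, tsum_fintype]

lemma sum_zmod_three {M : Type*} [AddCommMonoid M] (h : ZMod 3 → M) :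
    ∑ j, h j = h 0 + h 1 + h (-1) :=
  Fin.sum_univ_three h

lemma tsum_sub_tsum_addChar_mul {G R : Type*} [AddGroup G] [NormedField R] [CompleteSpace R]
    (κ : G →+ ZMod 3) {ψ : AddChar (ZMod 3) R} (hψ : ψ ≠ 1) {f : G → R} (hf : Summable f)
    (hψf : Summable fun g => ψ (κ g) * f g) (f_neg : ∀ g, f (-g) = f g) :
    ∑' g, f g - ∑' g, ψ (κ g) * f g = 3 * ∑' g : κ ⁻¹' {1}, f g := by
  have fiber_char (j : ZMod 3) :
      ∑' g : κ ⁻¹' {j}, ψ (κ g) * f g = ψ j * ∑' g : κ ⁻¹' {j}, f g := by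
    rw [← tsum_mul_left]
    exact tsum_congr fun g => by rw [show κ g = j from g.2]
  have fiber_neg_one : ∑' g : κ ⁻¹' {-1}, f g = ∑' g : κ ⁻¹' {1}, f g := by
    have image_eq : κ ⁻¹' {-1} = Neg.neg '' (κ ⁻¹' {1}) := by
      ext g
      simp [neg_eq_iff_eq_neg]
    rw [image_eq, tsum_image f neg_injective.injOn]
    simp only [f_neg]
  have sum_char : 1 + ψ 1 + ψ (-1) = 0 := by
    rw [← ψ.map_zero_eq_one, ← sum_zmod_three, AddChar.sum_eq_zero_of_ne_one hψ]
  rw [← (hf.hasSum.tsum_fiberwise κ).tsum_eq, ← (hψf.hasSum.tsum_fiberwise κ).tsum_eq,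
    tsum_fintype, tsum_fintype, sum_zmod_three, sum_zmod_three]
  simp only [fiber_char, fiber_neg_one, ψ.map_zero_eq_one]
  linear_combination -(∑' g : κ ⁻¹' {1}, f g) * sum_char

lemma zpow_add_of_nonneg {G₀ : Type*} [GroupWithZero G₀] (a : G₀) {m n : ℤ} (hm : 0 ≤ m)
    (hn : 0 ≤ n) : a ^ (m + n) = a ^ m * a ^ n :=
  zpow_add' (by omega)

lemma summable_zpow_abs {r : ℝ} (hr₀ : 0 ≤ r) (hr₁ : r < 1) : Summable fun m : ℤ => r ^ |m| := by
  have geometric := summable_geometric_of_lt_one hr₀ hr₁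
  exact .of_nat_of_neg (by simpa using geometric) (by simpa using geometric)

lemma norm_cpow_natCast_inv_lt_one {z : ℂ} {n : ℕ} (hn : n ≠ 0) (hz : ‖z‖ < 1) :
    ‖z ^ (n⁻¹ : ℂ)‖ < 1 := by
  rw [← Complex.cpow_nat_inv_pow z hn, norm_pow] at hz
  exact (pow_lt_one_iff_of_nonneg (norm_nonneg _) hn).mp hz

/-- The Eisenstein integers `ℤ[ζ]`, presented by `ζ² = ζ - 1`: the generator is a primitive *sixth*
root of unity, so that the norm is `m² + mn + n²` rather than `m² - mn + n²`. The cube roots of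
unity are `1`, `ζ²`, `ζ⁴`. -/
abbrev EisensteinInt : Type := QuadraticAlgebra ℤ (-1) 1

namespace EisensteinInt

open QuadraticAlgebra

local notation "ζ" => (omega : EisensteinInt)
local notation "θ" => (2 - omega : EisensteinInt)

lemma zeta_sq : ζ ^ 2 = ζ - 1 := by
  ext <;> simp [pow_two]

lemma zeta_pow_six : ζ ^ 6 = 1 := by
  linear_combination (ζ ^ 4 + ζ ^ 3 - ζ - 1) * zeta_sq

lemma re_zeta_sq_mul (z : EisensteinInt) : (ζ ^ 2 * z).re = -(z.re + z.im) := by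
  rw [zeta_sq, sub_mul, one_mul, re_sub, re_mul, omega_re, omega_im]
  ring

lemma im_zeta_sq_mul (z : EisensteinInt) : (ζ ^ 2 * z).im = z.re := by
  simp [zeta_sq]

lemma re_zeta_pow_four_mul (z : EisensteinInt) : (ζ ^ 4 * z).re = z.im := by
  rw [pow_add ζ 2 2, mul_assoc, re_zeta_sq_mul, re_zeta_sq_mul, im_zeta_sq_mul]
  ring

lemma im_zeta_pow_four_mul (z : EisensteinInt) : (ζ ^ 4 * z).im = -(z.re + z.im) := by
  rw [pow_add ζ 2 2, mul_assoc, im_zeta_sq_mul, re_zeta_sq_mul]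

lemma re_theta_mul (z : EisensteinInt) : (θ * z).re = 2 * z.re + z.im := by
  simp

lemma im_theta_mul (z : EisensteinInt) : (θ * z).im = z.im - z.re := by
  rw [im_mul, re_sub, im_sub, omega_re, omega_im, re_ofNat, im_ofNat]
  ring

lemma norm_eq (z : EisensteinInt) : norm z = z.re ^ 2 + z.re * z.im + z.im ^ 2 := by
  rw [norm_def]; ring

lemma norm_nonneg (z : EisensteinInt) : 0 ≤ norm z := by
  rw [norm_eq]
  nlinarith [sq_nonneg (z.re + z.im), sq_nonneg z.re, sq_nonneg z.im]

lemma abs_re_add_abs_im_le_two_mul_norm (z : EisensteinInt) :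
    |z.re| + |z.im| ≤ 2 * norm z := by
  have abs_le_sq (m : ℤ) : |m| ≤ m ^ 2 := by
    rw [← Int.natCast_natAbs]
    exact Int.natAbs_le_self_sq m
  rw [norm_eq]
  nlinarith [abs_le_sq z.re, abs_le_sq z.im, sq_nonneg (z.re + z.im)]

/-- Reduction modulo the prime `θ = 2 - ζ = 1 - ζ²` of norm 3. Since `ζ² ≡ 1` and `ζ² = ζ - 1`, it
sends `ζ` to `2 = -1`. -/
def residue : EisensteinInt →+* ZMod 3 :=
  (lift ⟨-1, by decide⟩ : EisensteinInt →ₐ[ℤ] ZMod 3)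

lemma residue_apply (z : EisensteinInt) : residue z = ((z.re - z.im : ℤ) : ZMod 3) := by
  simp [residue, sub_eq_add_neg]

lemma residue_zeta : residue ζ = -1 := by simp [residue_apply]

lemma residue_eq_zero_iff_dvd (z : EisensteinInt) : residue z = 0 ↔ θ ∣ z := by
  constructor
  · rw [residue_apply, ZMod.intCast_zmod_eq_zero_iff_dvd]
    rintro ⟨k, hk⟩
    refine ⟨⟨k, z.im + k⟩, QuadraticAlgebra.ext ?_ ?_⟩
    · rw [re_theta_mul]
      dsimp only
      omega
    · rw [im_theta_mul]
      ring
  · rintro ⟨w, rfl⟩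
    rw [map_mul, map_sub, residue_zeta, map_ofNat]
    exact zero_mul _

lemma norm_theta_mul_add_one (z : EisensteinInt) :
    norm (θ * z + 1) = 3 * (norm z + z.re + z.im) + 1 := by
  rw [norm_eq, norm_eq, re_add, im_add, re_theta_mul, im_theta_mul, re_one, im_one]
  ring

lemma theta_mul_injective : Function.Injective fun z : EisensteinInt => θ * z := by
  intro z w h
  simp only [QuadraticAlgebra.ext_iff, re_theta_mul, im_theta_mul] at h ⊢
  omega

lemma summable_norm_zpow_norm {𝕜 : Type*} [NormedDivisionRing 𝕜] {q : 𝕜} (hq : ‖q‖ < 1) :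
    Summable fun z : EisensteinInt => ‖q ^ norm z‖ := by
  obtain ⟨t, t_pos, t_lt_one, norm_le_sq⟩ : ∃ t : ℝ, 0 < t ∧ t < 1 ∧ ‖q‖ ≤ t ^ 2 :=
    ⟨(1 + ‖q‖) / 2, by positivity, by linarith, by nlinarith [sq_nonneg (1 - ‖q‖)]⟩
  have summable_abs := summable_zpow_abs t_pos.le t_lt_one
  have summable_prod : Summable fun p : ℤ × ℤ => t ^ |p.1| * t ^ |p.2| :=
    (summable_abs.norm.mul_norm summable_abs.norm).of_norm
  refine .of_nonneg_of_le (fun z => _root_.norm_nonneg _) (fun z => ?_)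
    ((equivProd (-1 : ℤ) 1).summable_iff.mpr summable_prod)
  calc ‖q ^ norm z‖ = ‖q‖ ^ norm z := norm_zpow _ _
    _ ≤ (t ^ 2) ^ norm z := zpow_le_zpow_left₀ (norm_nonneg z) (_root_.norm_nonneg q) norm_le_sq
    _ = t ^ (2 * norm z) := by rw [zpow_mul]; norm_cast
    _ ≤ t ^ (|z.re| + |z.im|) :=
      zpow_le_zpow_right_of_le_one₀ t_pos t_lt_one.le (abs_re_add_abs_im_le_two_mul_norm z)
    _ = t ^ |z.re| * t ^ |z.im| := zpow_add₀ t_pos.ne' _ _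

lemma summable_norm_zpow_norm_theta_mul_add_one {𝕜 : Type*} [NormedDivisionRing 𝕜] {q : 𝕜}
    (hq : ‖q‖ < 1) : Summable fun z : EisensteinInt => ‖q ^ norm (θ * z + 1)‖ :=
  (summable_norm_zpow_norm hq).comp_injective
    ((add_left_injective 1).comp theta_mul_injective)

/-- Triples of Eisenstein integers, which index the terms of a cubed theta series. -/
abbrev Triple : Type := EisensteinInt × EisensteinInt × EisensteinInt

/-- The sum of the norms of the coordinates: the exponent of the term indexed by `v`. -/
def normSum (v : Triple) : ℤ := norm v.1 + (norm v.2.1 + norm v.2.2)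

/-- The reduction modulo `θ` of the sum of the coordinates. -/
def residueSum : Triple →+ ZMod 3 :=
  residue.toAddMonoidHom.coprod (residue.toAddMonoidHom.coprod residue.toAddMonoidHom)

lemma residueSum_apply (v : Triple) :
    residueSum v = residue v.1 + (residue v.2.1 + residue v.2.2) := rfl

/-- The discrete Fourier transform on three points for the cube root of unity `ζ²`, without the
normalising factor `1/√3`. -/
def dft (v : Triple) : Triple :=
  (v.1 + v.2.1 + v.2.2, v.1 + ζ ^ 2 * v.2.1 + ζ ^ 4 * v.2.2, v.1 + ζ ^ 4 * v.2.1 + ζ ^ 2 * v.2.2)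

lemma zpow_normSum {G₀ : Type*} [GroupWithZero G₀] (q : G₀) (v : Triple) :
    q ^ normSum v = q ^ norm v.1 * (q ^ norm v.2.1 * q ^ norm v.2.2) := by
  rw [normSum, zpow_add_of_nonneg _ (norm_nonneg _) (add_nonneg (norm_nonneg _) (norm_nonneg _)),
    zpow_add_of_nonneg _ (norm_nonneg _) (norm_nonneg _)]

lemma normSum_neg (v : Triple) : normSum (-v) = normSum v := by
  simp [normSum]

lemma normSum_dft (v : Triple) : normSum (dft v) = 3 * normSum v := by
  simp only [normSum, dft, norm_eq, re_add, im_add, re_zeta_sq_mul, im_zeta_sq_mul,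
    re_zeta_pow_four_mul, im_zeta_pow_four_mul]
  ring

lemma dft_injective : Function.Injective dft := by
  rintro ⟨x, y, z⟩ ⟨x', y', z'⟩ h
  simp only [dft, Prod.mk.injEq, QuadraticAlgebra.ext_iff, re_add, im_add, re_zeta_sq_mul,
    im_zeta_sq_mul, re_zeta_pow_four_mul, im_zeta_pow_four_mul] at h ⊢
  omega

lemma theta_smul_add_one_injective : Function.Injective fun w : Triple => θ • w + 1 :=
  (add_left_injective 1).comp <|
    theta_mul_injective.prodMap (theta_mul_injective.prodMap theta_mul_injective)

lemma dft_one_add_theta_mul_sub_sub (t y z : EisensteinInt) :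
    dft (1 + θ * t - y - z, y, z) = θ • (t, t - y - ζ * z, t - ζ * y - z) + 1 := by
  refine Prod.ext ?_ (Prod.ext ?_ ?_)
  · change 1 + θ * t - y - z + y + z = θ * t + 1
    ring
  · change 1 + θ * t - y - z + ζ ^ 2 * y + ζ ^ 4 * z = θ * (t - y - ζ * z) + 1
    linear_combination (y + z * (ζ ^ 2 + ζ - 1)) * zeta_sq
  · change 1 + θ * t - y - z + ζ ^ 4 * y + ζ ^ 2 * z = θ * (t - ζ * y - z) + 1
    linear_combination (z + y * (ζ ^ 2 + ζ - 1)) * zeta_sq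

lemma image_dft_residueSum_one :
    dft '' (residueSum ⁻¹' {1}) = (fun w => θ • w + 1) '' (residueSum ⁻¹' {0}) := by
  have three_eq_zero : (3 : ZMod 3) = 0 := rfl
  apply Set.Subset.antisymm
  · rintro _ ⟨⟨x, y, z⟩, hv, rfl⟩
    have residue_sub_one : residue (x + y + z - 1) = 0 := by
      rw [map_sub, map_add, map_add, map_one, add_assoc, sub_eq_zero]
      exact hv
    obtain ⟨t, ht⟩ := (residue_eq_zero_iff_dvd _).mp residue_sub_one
    obtain rfl : x = 1 + θ * t - y - z := by linear_combination ht
    refine ⟨(t, t - y - ζ * z, t - ζ * y - z), ?_, (dft_one_add_theta_mul_sub_sub t y z).symm⟩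
    simp only [Set.mem_preimage, Set.mem_singleton_iff, residueSum_apply, map_sub, map_mul,
      residue_zeta]
    linear_combination residue t * three_eq_zero
  · rintro _ ⟨⟨t, u, v⟩, hw, rfl⟩
    -- `u = t - y - ζ * z` and `v = t - ζ * y - z` give `t - v - ζ * (t - u) = (1 - ζ ^ 2) * z`.
    have residue_diff : residue (t - v - ζ * (t - u)) = 0 := by
      simp only [Set.mem_preimage, Set.mem_singleton_iff, residueSum_apply] at hw
      simp only [map_sub, map_mul, residue_zeta]
      linear_combination -hw + residue t * three_eq_zero
    obtain ⟨z, hz⟩ := (residue_eq_zero_iff_dvd _).mp residue_diff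
    refine ⟨(1 + θ * t - (t - u - ζ * z) - z, t - u - ζ * z, z), ?_, ?_⟩
    · have residue_theta : residue θ = 0 := (residue_eq_zero_iff_dvd _).mpr dvd_rfl
      rw [Set.mem_preimage, residueSum_apply]
      simp only [map_sub, map_add, map_mul, map_one, residue_theta, Set.mem_singleton_iff]
      ring
    · have hv : t - ζ * (t - u - ζ * z) - z = v := by
        linear_combination hz + z * zeta_sq
      rw [dft_one_add_theta_mul_sub_sub, hv, sub_sub, sub_add_cancel, sub_sub_cancel]

lemma tsum_residueSum_one_eq_tsum_residueSum_zero {𝕜 : Type*} [NormedDivisionRing 𝕜] (r : 𝕜) :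
    ∑' v : residueSum ⁻¹' {1}, (r ^ 3) ^ normSum v =
      ∑' w : residueSum ⁻¹' {0}, r ^ normSum (θ • (w : Triple) + 1) := by
  calc
    _ = ∑' v : residueSum ⁻¹' {1}, r ^ normSum (dft v) :=
      tsum_congr fun v => by rw [normSum_dft, zpow_mul]; norm_cast
    _ = ∑' v : dft '' (residueSum ⁻¹' {1}), r ^ normSum v :=
      (tsum_image (fun v => r ^ normSum v) dft_injective.injOn).symm
    _ = _ := by
      rw [image_dft_residueSum_one,
        tsum_image (fun v => r ^ normSum v) theta_smul_add_one_injective.injOn]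

/-- Multiplication by the cube root of unity `ζ⁴` in the coordinate `θ * w + 1`. -/
def rotation : EisensteinInt ≃ EisensteinInt where
  toFun w := ζ ^ 4 * (w + 1)
  invFun w := ζ ^ 2 * w - 1
  left_inv w := by linear_combination (w + 1) * zeta_pow_six
  right_inv w := by linear_combination w * zeta_pow_six

lemma norm_zeta : norm ζ = 1 := by simp [norm_eq]

lemma norm_theta_mul_rotation_add_one (w : EisensteinInt) :
    norm (θ * rotation w + 1) = norm (θ * w + 1) := by
  have rotation_spec : θ * rotation w + 1 = ζ ^ 4 * (θ * w + 1) := by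
    change θ * (ζ ^ 4 * (w + 1)) + 1 = _
    linear_combination (1 + ζ - ζ ^ 3) * zeta_sq
  rw [rotation_spec, map_mul, map_pow, norm_zeta, one_pow, one_mul]

lemma residue_rotation (w : EisensteinInt) : residue (rotation w) = residue w + 1 := by
  change residue (ζ ^ 4 * (w + 1)) = _
  rw [map_mul, map_pow, residue_zeta, Even.neg_one_pow (by decide), one_mul, map_add, map_one]

lemma borweinA_eq_tsum (q : ℂ) : borweinA q = ∑' z : EisensteinInt, q ^ norm z := by
  rw [borweinA, ← (equivProd (-1 : ℤ) 1).tsum_eq]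
  exact tsum_congr fun z => by rw [norm_eq]; rfl

lemma borweinB_eq_tsum (q : ℂ) :
    borweinB q = ∑' z : EisensteinInt, ZMod.stdAddChar (residue z) * q ^ norm z := by
  rw [borweinB, ← ((equivProd (-1 : ℤ) 1).trans (.prodComm ℤ ℤ)).tsum_eq]
  refine tsum_congr fun z => ?_
  change Complex.exp (2 * Real.pi * Complex.I / 3) ^ (z.re - z.im) *
    q ^ (z.im ^ 2 + z.im * z.re + z.re ^ 2) = _
  rw [residue_apply, ZMod.stdAddChar_coe, ← Complex.exp_int_mul, norm_eq]
  congr 2 <;> push_cast <;> ring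

lemma borweinC_eq_tsum (q : ℂ) :
    borweinC q = ∑' z : EisensteinInt, (q ^ (3⁻¹ : ℂ)) ^ norm (θ * z + 1) := by
  rw [borweinC, ← (equivProd (-1 : ℤ) 1).tsum_eq]
  refine tsum_congr fun z => ?_
  rw [← Complex.cpow_mul_int, norm_theta_mul_add_one, norm_eq]
  change q ^ (((z.re : ℂ) + 1 / 3) ^ 2 + ((z.re : ℂ) + 1 / 3) * ((z.im : ℂ) + 1 / 3) +
    ((z.im : ℂ) + 1 / 3) ^ 2) = _
  congr 1
  push_cast
  ring

lemma borweinA_pow_three_sub_borweinB_pow_three {q : ℂ} (hq : ‖q‖ < 1) :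
    borweinA q ^ 3 - borweinB q ^ 3 = 3 * ∑' v : residueSum ⁻¹' {1}, q ^ normSum v := by
  have summable_a := summable_norm_zpow_norm hq
  have summable_b : Summable fun z => ‖ZMod.stdAddChar (residue z) * q ^ norm z‖ := by
    simpa using summable_a
  have char_mul (v : Triple) :
      ZMod.stdAddChar (residue v.1) * q ^ norm v.1 *
        (ZMod.stdAddChar (residue v.2.1) * q ^ norm v.2.1 *
          (ZMod.stdAddChar (residue v.2.2) * q ^ norm v.2.2)) =
        ZMod.stdAddChar (residueSum v) * q ^ normSum v := by
    rw [residueSum_apply, AddChar.map_add_eq_mul, AddChar.map_add_eq_mul, zpow_normSum]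
    ring
  have stdAddChar_ne_one : (ZMod.stdAddChar : AddChar (ZMod 3) ℂ) ≠ 1 := fun h => by
    have : (1 : ZMod 3) = 0 := ZMod.injective_stdAddChar (by simp [h])
    exact absurd this (by decide)
  have summable_a_cubed := summable_mul_mul_of_summable_norm summable_a
  have summable_b_cubed := summable_mul_mul_of_summable_norm summable_b
  simp only [char_mul, ← zpow_normSum] at summable_a_cubed summable_b_cubed
  rw [borweinA_eq_tsum, borweinB_eq_tsum, tsum_pow_three_of_summable_norm summable_a,
    tsum_pow_three_of_summable_norm summable_b]
  simp only [char_mul, ← zpow_normSum]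
  exact tsum_sub_tsum_addChar_mul residueSum stdAddChar_ne_one summable_a_cubed summable_b_cubed
    fun v => by rw [normSum_neg]

lemma tsum_zpow_norm_theta_mul_add_one_pow_three {𝕜 : Type*} [NormedField 𝕜] [CompleteSpace 𝕜]
    {r : 𝕜} (hr : ‖r‖ < 1) :
    (∑' w : EisensteinInt, r ^ norm (θ * w + 1)) ^ 3 =
      3 * ∑' w : residueSum ⁻¹' {0}, r ^ normSum (θ • (w : Triple) + 1) := by
  have summable_c := summable_norm_zpow_norm_theta_mul_add_one hr
  have zpow_mul_mul (w : Triple) :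
      r ^ norm (θ * w.1 + 1) * (r ^ norm (θ * w.2.1 + 1) * r ^ norm (θ * w.2.2 + 1)) =
        r ^ normSum (θ • w + 1) := by
    rw [zpow_normSum]
    rfl
  have summable_c_cubed := summable_mul_mul_of_summable_norm summable_c
  simp only [zpow_mul_mul] at summable_c_cubed
  rw [tsum_pow_three_of_summable_norm summable_c]
  simp only [zpow_mul_mul]
  rw [tsum_eq_nsmul_tsum_fiber_zero summable_c_cubed residueSum
    (rotation.prodCongr (Equiv.refl _)), nsmul_eq_mul, Nat.cast_ofNat]
  · intro w
    change residue (rotation w.1) + (residue w.2.1 + residue w.2.2) = residueSum w + 1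
    rw [residue_rotation, residueSum_apply]
    ring
  · intro w
    simp [normSum, norm_theta_mul_rotation_add_one]

lemma borweinC_pow_three {q : ℂ} (hq : ‖q‖ < 1) :
    borweinC q ^ 3 =
      3 * ∑' w : residueSum ⁻¹' {0}, (q ^ (3⁻¹ : ℂ)) ^ normSum (θ • (w : Triple) + 1) := by
  rw [borweinC_eq_tsum]
  exact tsum_zpow_norm_theta_mul_add_one_pow_three
    (norm_cpow_natCast_inv_lt_one three_ne_zero hq)

end EisensteinInt

/-- `a(q)³ = b(q)³ + c(q)³`. -/
theorem borwein_cubic (q : ℂ) (hq : ‖q‖ < 1) :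
    borweinA q ^ 3 = borweinB q ^ 3 + borweinC q ^ 3 := by
  have cube_root : (q ^ (3⁻¹ : ℂ)) ^ 3 = q := Complex.cpow_ofNat_inv_pow q 3
  rw [← sub_eq_iff_eq_add', EisensteinInt.borweinA_pow_three_sub_borweinB_pow_three hq,
    EisensteinInt.borweinC_pow_three hq,
    ← EisensteinInt.tsum_residueSum_one_eq_tsum_residueSum_zero, cube_root]
end
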